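/- Let l be any positive integer. Then there exists a matrix β with entries β_{i,j} ∈ {0,1} for i,j ∈ {1,…,l} satisfying the column-sum constraint Σ_{i=1}^l β_{i,j} = j for every j and the relaxed fairness condition |Σ_{j=1}^l β_{i₁,j} − Σ_{j=1}^l β_{i₂,j}| ≤ 1 for all channel indices i₁, i₂ ∈ {1,…,l}. -/

import Mathlib

/-!
Number the training slots `0, 1, 2, …` and deal them to the `l` channels in round-robin order,
letting each sub-architecture take its slots right after those of its predecessor. A block of at
most `l` consecutive slots never meets the same channel twice, which makes the indicator 0/1-valued,
and a channel's training count is the number of dealt slots in its residue class modulo `l`; for a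
total of `N` slots this is `N / l` or `N / l + 1`.
-/

open Finset

/-- A cyclic weight-sharing pattern for `l` channels in which column `j ≥ 1` has sum `c j`:
the entry `(i, j)` counts the slots of the block of column `j`, which starts after the blocks of
columns `1, …, j - 1`, that are congruent to `i` modulo `l`. -/
def cyclicIndicator (l : ℕ) (c : ℕ → ℕ) (i j : ℕ) : ℕ :=
  Nat.count (fun k => ∑ t ∈ Ico 1 j, c t + k ≡ i [MOD l]) (c j)

lemma count_add_modEq_le_one {l n : ℕ} (hn : n ≤ l) (a i : ℕ) :
    Nat.count (fun k => a + k ≡ i [MOD l]) n ≤ 1 := by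
  rw [Nat.count_eq_card_filter_range, card_le_one]
  simp only [mem_filter, mem_range]
  rintro k ⟨hk, hki⟩ m ⟨hm, hmi⟩
  have hkm : k ≡ m [MOD l] := (hki.trans hmi.symm).add_left_cancel'
  exact hkm.eq_of_lt_of_lt (hk.trans_le hn) (hm.trans_le hn)

lemma card_filter_Icc_modEq {l : ℕ} (hl : 0 < l) (v : ℕ) :
    #{i ∈ Icc 1 l | v ≡ i [MOD l]} = 1 := by
  have hperiod : Function.Periodic (· ≡ v [MOD l]) l := fun k => by
    simp only [Nat.ModEq, Nat.add_mod_right]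
  calc #{i ∈ Icc 1 l | v ≡ i [MOD l]}
      = #{i ∈ Ico 1 (1 + l) | i ≡ v [MOD l]} := by
        simp only [add_comm 1 l, Ico_add_one_right_eq_Icc, Nat.ModEq.comm]
    _ = l.count (· ≡ v [MOD l]) := Nat.filter_Ico_card_eq_of_periodic 1 l _ hperiod
    _ = 1 := by simp [Nat.count_modEq_card l hl, Nat.div_self hl]

lemma sum_cyclicIndicator_column {l : ℕ} (hl : 0 < l) (c : ℕ → ℕ) (j : ℕ) :
    ∑ i ∈ Icc 1 l, cyclicIndicator l c i j = c j := by
  simp only [cyclicIndicator, Nat.count_eq_card_filter_range]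
  calc ∑ i ∈ Icc 1 l, #{k ∈ range (c j) | ∑ t ∈ Ico 1 j, c t + k ≡ i [MOD l]}
      = ∑ k ∈ range (c j), #{i ∈ Icc 1 l | ∑ t ∈ Ico 1 j, c t + k ≡ i [MOD l]} :=
        (sum_card_bipartiteAbove_eq_sum_card_bipartiteBelow _).symm
    _ = c j := by simp only [card_filter_Icc_modEq hl, sum_const, card_range, smul_eq_mul, mul_one]

lemma sum_cyclicIndicator_row (l : ℕ) (c : ℕ → ℕ) (i m : ℕ) :
    ∑ j ∈ Icc 1 m, cyclicIndicator l c i j =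
      Nat.count (· ≡ i [MOD l]) (∑ j ∈ Icc 1 m, c j) := by
  induction m with
  | zero => simp
  | succ m ih =>
    rw [sum_Icc_succ_top (Nat.le_add_left 1 m), sum_Icc_succ_top (Nat.le_add_left 1 m), ih,
      Nat.count_add, cyclicIndicator, Ico_add_one_right_eq_Icc]

lemma abs_count_modEq_sub_le_one {l : ℕ} (hl : 0 < l) (n i₁ i₂ : ℕ) :
    |(Nat.count (· ≡ i₁ [MOD l]) n : ℤ) - (Nat.count (· ≡ i₂ [MOD l]) n : ℤ)| ≤ 1 := by
  rw [Nat.count_modEq_card n hl, Nat.count_modEq_card n hl, abs_le]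
  split_ifs <;> omega

theorem relaxed_fair_indicator_exists_general (l m : ℕ) (hl : 0 < l) (c : ℕ → ℕ)
    (hc : ∀ j ∈ Icc 1 m, c j ≤ l) :
    ∃ β : ℕ → ℕ → ℕ,
      (∀ i ∈ Icc 1 l, ∀ j ∈ Icc 1 m, β i j = 0 ∨ β i j = 1) ∧
      (∀ j ∈ Icc 1 m, ∑ i ∈ Icc 1 l, β i j = c j) ∧
      (∀ i₁ ∈ Icc 1 l, ∀ i₂ ∈ Icc 1 l,
        |((∑ j ∈ Icc 1 m, β i₁ j : ℕ) : ℤ) - ((∑ j ∈ Icc 1 m, β i₂ j : ℕ) : ℤ)| ≤ 1) := by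
  refine ⟨cyclicIndicator l c, fun i _ j hj => ?_,
    fun j _ => sum_cyclicIndicator_column hl c j, fun i₁ _ i₂ _ => ?_⟩
  · exact Nat.le_one_iff_eq_zero_or_eq_one.mp (count_add_modEq_le_one (hc j hj) _ i)
  · rw [sum_cyclicIndicator_row, sum_cyclicIndicator_row]
    exact abs_count_modEq_sub_le_one hl _ i₁ i₂

/-- For every positive `l` there is a 0/1 weight-sharing indicator on `{1,…,l} × {1,…,l}`
with column sums `∑_{i=1}^l β i j = j` for every `j`, whose row sums (channel training
counts) pairwise differ by at most 1 (the relaxed training-fairness condition). -/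
theorem relaxed_fair_indicator_exists (l : ℕ) (hl : 0 < l) :
    ∃ β : ℕ → ℕ → ℕ,
      (∀ i ∈ Finset.Icc 1 l, ∀ j ∈ Finset.Icc 1 l, β i j = 0 ∨ β i j = 1) ∧
      (∀ j ∈ Finset.Icc 1 l, ∑ i ∈ Finset.Icc 1 l, β i j = j) ∧
      (∀ i₁ ∈ Finset.Icc 1 l, ∀ i₂ ∈ Finset.Icc 1 l,
        |((∑ j ∈ Finset.Icc 1 l, β i₁ j : ℕ) : ℤ) -
          ((∑ j ∈ Finset.Icc 1 l, β i₂ j : ℕ) : ℤ)| ≤ 1) := by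
  exact relaxed_fair_indicator_exists_general l l hl id fun _ hj => (Finset.mem_Icc.mp hj).2
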